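/- arXiv:2206.05753 — 2 statements merged into one kernel-verified Lean document; each statement's English description precedes it below -/
import Mathlib

section
/- Assume the gain conditions: λ_min(K_s) ≥ 1 + k_{n2}·(k_θ·ρ̄₃·N·λ_d)², α₂·k·m₁ ≥ α₂ + k_{n2}·(k_θ·ρ̄₃·N·λ_d)² + k_{n3}·ρ₄(t)² for all t ≥ 0, min{α₁, α₃} ≥ 1, k_{n2} > 1/(4·k_θ·λ̲) and k_{n3} > 1/(4·min{α₁, α₂, α₃}). Then every solution of the closed-loop output-feedback system satisfies ‖v(t)‖ ≤ (λ₄/λ₃)^{1/2}·‖v(0)‖·exp(−(γ₁/λ₄)·t) for all t ≥ 0 and some constant γ₁ > 0, where v(t) = (e(t), e_f(t), η(t), θ̃(t)), λ₃ = (1/2)·min{λ_min(K_s), m₁, λ_min(Γ⁻¹)} and λ₄ = (1/2)·max{λ_max(K_s), m₂, λ_max(Γ⁻¹)}; in particular e(t) and θ̃(t) converge exponentially to zero. -/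
open Matrix
open scoped BigOperators

/-- Euclidean norm of a vector in `Fin m → ℝ`. -/
noncomputable def eunorm {m : ℕ} (v : Fin m → ℝ) : ℝ :=
  Real.sqrt (∑ i, (v i) ^ 2)

/-!
Lyapunov argument with `V = ½ (eᵀ Kₛ e + e_fᵀ Kₛ e_f + ηᵀ M η + θ̃ᵀ Γ⁻¹ θ̃)`. Along the closed loop
the skew symmetry of `Ṁ - 2 C` and the choice of the filter and of the adaptation law cancel every
indefinite cross term except `ηᵀ χ` and `-k_θ θ̃ᵀ Σ 𝒴ᵢᵀ Ωᵢ`. Young's inequality with weights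
`k_{n3}` and `k_{n2}` trades these two against the damping in `z` and in `θ̃`, so that
`V̇ ≤ -γ ‖v‖²`; as `V` lies between `λ₃ ‖v‖²` and `λ₄ ‖v‖²`, Grönwall's inequality gives exponential
decay.
-/

section Eunorm

variable {m : ℕ}

theorem eunorm_nonneg (v : Fin m → ℝ) : 0 ≤ eunorm v :=
  Real.sqrt_nonneg _

theorem eunorm_sq (v : Fin m → ℝ) : eunorm v ^ 2 = ∑ i, v i ^ 2 :=
  Real.sq_sqrt (Finset.sum_nonneg fun _ _ => sq_nonneg _)

theorem eunorm_neg (v : Fin m → ℝ) : eunorm (-v) = eunorm v := by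
  simp [eunorm]

theorem dotProduct_le_eunorm_mul_eunorm (u v : Fin m → ℝ) : u ⬝ᵥ v ≤ eunorm u * eunorm v :=
  Real.sum_mul_le_sqrt_mul_sqrt _ _ _

theorem neg_dotProduct_le_eunorm_mul_eunorm (u v : Fin m → ℝ) :
    -(u ⬝ᵥ v) ≤ eunorm u * eunorm v := by
  simpa only [neg_dotProduct, eunorm_neg] using dotProduct_le_eunorm_mul_eunorm (-u) v

end Eunorm

section QuadraticForms

variable {m : ℕ} {a b : ℝ} {A : Matrix (Fin m) (Fin m) ℝ}

/-- The quadratic form of `A` lies between `a ‖ξ‖²` and `b ‖ξ‖²`. For symmetric `A` this says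
`a ≤ λ_min(A)` and `λ_max(A) ≤ b`. -/
def QuadFormBetween (a b : ℝ) (A : Matrix (Fin m) (Fin m) ℝ) : Prop :=
  ∀ ξ : Fin m → ℝ, a * eunorm ξ ^ 2 ≤ ξ ⬝ᵥ A *ᵥ ξ ∧ ξ ⬝ᵥ A *ᵥ ξ ≤ b * eunorm ξ ^ 2

theorem QuadFormBetween.mono {a' b' : ℝ} (h : QuadFormBetween a b A) (ha : a' ≤ a) (hb : b ≤ b') :
    QuadFormBetween a' b' A := fun ξ =>
  ⟨(mul_le_mul_of_nonneg_right ha (sq_nonneg _)).trans (h ξ).1,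
    (h ξ).2.trans (mul_le_mul_of_nonneg_right hb (sq_nonneg _))⟩

theorem quadFormBetween_diagonal (d : Fin m → ℝ) :
    QuadFormBetween (⨅ i, d i) (⨆ i, d i) (diagonal d) := by
  intro ξ
  have hform : ξ ⬝ᵥ diagonal d *ᵥ ξ = ∑ i, d i * ξ i ^ 2 := by
    simp only [dotProduct, mulVec_diagonal]
    exact Finset.sum_congr rfl fun i _ => by ring
  rw [hform, eunorm_sq, Finset.mul_sum, Finset.mul_sum]
  constructor <;> refine Finset.sum_le_sum fun i _ => ?_ <;> gcongr
  · exact ciInf_le (Set.finite_range d).bddBelow i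
  · exact le_ciSup (Set.finite_range d).bddAbove i

end QuadraticForms

theorem dotProduct_mulVec_comm_of_isSymm {ι R : Type*} [Fintype ι] [CommSemiring R]
    {A : Matrix ι ι R} (hA : A.IsSymm) (x y : ι → R) : x ⬝ᵥ A *ᵥ y = y ⬝ᵥ A *ᵥ x := by
  rw [← dotProduct_transpose_mulVec, hA.eq]

section Derivatives

variable {𝕜 𝔸 ι κ : Type*} [NontriviallyNormedField 𝕜] [Fintype κ] {s : Set 𝕜} {t : 𝕜}

theorem hasDerivWithinAt_dotProduct [NormedRing 𝔸] [NormedAlgebra 𝕜 𝔸] {u v : 𝕜 → κ → 𝔸}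
    {u' v' : κ → 𝔸} (hu : HasDerivWithinAt u u' s t) (hv : HasDerivWithinAt v v' s t) :
    HasDerivWithinAt (fun r => u r ⬝ᵥ v r) (u' ⬝ᵥ v t + u t ⬝ᵥ v') s t := by
  simp only [dotProduct, ← Finset.sum_add_distrib]
  exact HasDerivWithinAt.fun_sum fun i _ =>
    (hasDerivWithinAt_pi.1 hu i).mul (hasDerivWithinAt_pi.1 hv i)

theorem hasDerivWithinAt_mulVec [NormedRing 𝔸] [NormedAlgebra 𝕜 𝔸] {A : 𝕜 → Matrix ι κ 𝔸}
    {A' : Matrix ι κ 𝔸} {v : 𝕜 → κ → 𝔸} {v' : κ → 𝔸}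
    (hA : ∀ i j, HasDerivWithinAt (fun r => A r i j) (A' i j) s t)
    (hv : HasDerivWithinAt v v' s t) :
    HasDerivWithinAt (fun r => A r *ᵥ v r) (A' *ᵥ v t + A t *ᵥ v') s t :=
  hasDerivWithinAt_pi.2 fun i =>
    hasDerivWithinAt_dotProduct (hasDerivWithinAt_pi.2 (hA i)) hv

theorem hasDerivWithinAt_quadForm [NormedCommRing 𝔸] [NormedAlgebra 𝕜 𝔸] {A : 𝕜 → Matrix κ κ 𝔸}
    {A' : Matrix κ κ 𝔸} {v : 𝕜 → κ → 𝔸} {v' : κ → 𝔸} (hsymm : (A t).IsSymm)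
    (hA : ∀ i j, HasDerivWithinAt (fun r => A r i j) (A' i j) s t)
    (hv : HasDerivWithinAt v v' s t) :
    HasDerivWithinAt (fun r => v r ⬝ᵥ A r *ᵥ v r)
      (v t ⬝ᵥ A' *ᵥ v t + 2 * (v t ⬝ᵥ A t *ᵥ v')) s t := by
  convert hasDerivWithinAt_dotProduct hv (hasDerivWithinAt_mulVec hA hv) using 1
  rw [dotProduct_add, dotProduct_mulVec_comm_of_isSymm hsymm v' (v t)]
  ring

theorem hasDerivWithinAt_quadForm_const [NormedCommRing 𝔸] [NormedAlgebra 𝕜 𝔸] {A : Matrix κ κ 𝔸}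
    {v : 𝕜 → κ → 𝔸} {v' : κ → 𝔸} (hA : A.IsSymm) (hv : HasDerivWithinAt v v' s t) :
    HasDerivWithinAt (fun r => v r ⬝ᵥ A *ᵥ v r) (2 * (v t ⬝ᵥ A *ᵥ v')) s t := by
  simpa using hasDerivWithinAt_quadForm (A := fun _ => A) (A' := 0) hA
    (fun i j => hasDerivWithinAt_const t s (A i j)) hv

end Derivatives

section ExponentialDecay

theorem le_mul_exp_of_deriv_le_mul {V V' : ℝ → ℝ} {c : ℝ}
    (hV : ∀ t, 0 ≤ t → HasDerivWithinAt V (V' t) (Set.Ici 0) t)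
    (hV' : ∀ t, 0 ≤ t → V' t ≤ c * V t) {t : ℝ} (ht : 0 ≤ t) :
    V t ≤ V 0 * Real.exp (c * t) := by
  have hright : ∀ s ∈ Set.Ico 0 t, HasDerivWithinAt V (V' s) (Set.Ici s) s := fun s hs =>
    (hV s hs.1).mono (Set.Ici_subset_Ici.2 hs.1)
  have hcont : ContinuousOn V (Set.Icc 0 t) := fun s hs =>
    (hV s hs.1).continuousWithinAt.mono Set.Icc_subset_Ici_self
  simpa only [gronwallBound_ε0, sub_zero] using
    le_gronwallBound_of_liminf_deriv_right_le hcont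
      (fun s hs _ hr => (hright s hs).liminf_right_slope_le hr) le_rfl
      (fun s hs => (hV' s hs.1).trans_eq (add_zero _).symm) t ⟨ht, le_rfl⟩

theorem sqrt_le_mul_exp_of_lyapunov {V V' W : ℝ → ℝ} {a b γ : ℝ} (ha : 0 < a) (hb : 0 < b)
    (hγ : 0 ≤ γ) (hW : 0 ≤ W 0) (hV : ∀ t, 0 ≤ t → HasDerivWithinAt V (V' t) (Set.Ici 0) t)
    (hbetween : ∀ t, 0 ≤ t → a * W t ≤ V t ∧ V t ≤ b * W t)
    (hV' : ∀ t, 0 ≤ t → V' t ≤ -γ * W t) {t : ℝ} (ht : 0 ≤ t) :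
    √(W t) ≤ √(b / a) * √(W 0) * Real.exp (-(γ / 2 / b) * t) := by
  have hV'V : ∀ s, 0 ≤ s → V' s ≤ -(γ / b) * V s := fun s hs => calc
    V' s ≤ -γ * W s := hV' s hs
    _ = -(γ / b) * (b * W s) := by field_simp
    _ ≤ -(γ / b) * V s :=
      mul_le_mul_of_nonpos_left (hbetween s hs).2 (neg_nonpos.2 (by positivity))
  have hexp : Real.exp (-(γ / b) * t) = Real.exp (-(γ / 2 / b) * t) ^ 2 := by
    rw [← Real.exp_nat_mul]
    congr 1
    push_cast
    ring
  have hWt : a * W t ≤ b * W 0 * Real.exp (-(γ / b) * t) := calc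
    a * W t ≤ V t := (hbetween t ht).1
    _ ≤ V 0 * Real.exp (-(γ / b) * t) := le_mul_exp_of_deriv_le_mul hV hV'V ht
    _ ≤ b * W 0 * Real.exp (-(γ / b) * t) := by gcongr; exact (hbetween 0 le_rfl).2
  refine Real.sqrt_le_iff.2 ⟨by positivity, ?_⟩
  calc W t ≤ b * W 0 * Real.exp (-(γ / b) * t) / a := (le_div_iff₀' ha).2 hWt
    _ = (√(b / a) * √(W 0) * Real.exp (-(γ / 2 / b) * t)) ^ 2 := by
      rw [mul_pow, mul_pow, Real.sq_sqrt hW, Real.sq_sqrt (by positivity), ← hexp]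
      ring

end ExponentialDecay

section Damping

theorem mul_le_mul_sq_add_mul_sq {𝕜 : Type*} [Field 𝕜] [LinearOrder 𝕜] [IsStrictOrderedRing 𝕜]
    {c : 𝕜} (hc : 0 < c) (x y : 𝕜) : x * y ≤ c * x ^ 2 + 1 / (4 * c) * y ^ 2 := by
  have hsq : c * x ^ 2 + 1 / (4 * c) * y ^ 2 - x * y = (2 * c * x - y) ^ 2 / (4 * c) := by
    field_simp
    ring
  exact sub_nonneg.1 (hsq ▸ by positivity)

variable {m : ℕ} {c r Z : ℝ} {u v : Fin m → ℝ}

theorem dotProduct_le_of_eunorm_le (hc : 0 < c) (hv : eunorm v ≤ r * Z) :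
    u ⬝ᵥ v ≤ c * r ^ 2 * eunorm u ^ 2 + 1 / (4 * c) * Z ^ 2 := calc
  u ⬝ᵥ v ≤ eunorm u * eunorm v := dotProduct_le_eunorm_mul_eunorm u v
  _ ≤ eunorm u * (r * Z) := mul_le_mul_of_nonneg_left hv (eunorm_nonneg u)
  _ = (r * eunorm u) * Z := by ring
  _ ≤ c * (r * eunorm u) ^ 2 + 1 / (4 * c) * Z ^ 2 := mul_le_mul_sq_add_mul_sq hc _ _
  _ = c * r ^ 2 * eunorm u ^ 2 + 1 / (4 * c) * Z ^ 2 := by ring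

theorem neg_mul_dotProduct_le_of_eunorm_le {a : ℝ} (ha : 0 ≤ a) (hc : 0 < c)
    (hv : eunorm v ≤ r * Z) :
    -(a * (u ⬝ᵥ v)) ≤ c * (a * r) ^ 2 * Z ^ 2 + 1 / (4 * c) * eunorm u ^ 2 := calc
  -(a * (u ⬝ᵥ v)) = a * -(u ⬝ᵥ v) := by ring
  _ ≤ a * (eunorm u * (r * Z)) := by
    gcongr
    exact (neg_dotProduct_le_eunorm_mul_eunorm u v).trans
      (mul_le_mul_of_nonneg_left hv (eunorm_nonneg u))
  _ = (a * r * Z) * eunorm u := by ring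
  _ ≤ c * (a * r * Z) ^ 2 + 1 / (4 * c) * eunorm u ^ 2 := mul_le_mul_sq_add_mul_sq hc _ _
  _ = c * (a * r) ^ 2 * Z ^ 2 + 1 / (4 * c) * eunorm u ^ 2 := by ring

theorem QuadFormBetween.add_mul_sq_le {a b α β : ℝ} {A : Matrix (Fin m) (Fin m) ℝ}
    (hA : QuadFormBetween a b A) (hα : 1 ≤ α) (hcα : c ≤ α) (hβ : 0 ≤ β) (ha : 1 + β ≤ a)
    (ξ : Fin m → ℝ) : (c + β) * eunorm ξ ^ 2 ≤ α * (ξ ⬝ᵥ A *ᵥ ξ) := calc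
  (c + β) * eunorm ξ ^ 2 ≤ α * (1 + β) * eunorm ξ ^ 2 := by
    gcongr
    linarith [le_mul_of_one_le_left hβ hα]
  _ ≤ α * (a * eunorm ξ ^ 2) := by
    rw [mul_assoc]
    gcongr
  _ ≤ α * (ξ ⬝ᵥ A *ᵥ ξ) := mul_le_mul_of_nonneg_left (hA ξ).1 (zero_le_one.trans hα)

end Damping

section ClosedLoop

variable {n p : ℕ} {α₁ α₂ α₃ k kθ : ℝ} {K : Matrix (Fin n) (Fin n) ℝ}
  {P Γ : Matrix (Fin p) (Fin p) ℝ}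

/-- The Lyapunov function `½ (eᵀ K e + fᵀ K f + ηᵀ M η + θᵀ P θ)` of the closed loop, where `K` is
the feedback gain `Kₛ`, `M` the current inertia matrix and `P = Γ⁻¹`. -/
noncomputable def lyapunov (K M : Matrix (Fin n) (Fin n) ℝ) (P : Matrix (Fin p) (Fin p) ℝ)
    (e f η : Fin n → ℝ) (θ : Fin p → ℝ) : ℝ :=
  1 / 2 * (e ⬝ᵥ K *ᵥ e + f ⬝ᵥ K *ᵥ f + η ⬝ᵥ M *ᵥ η + θ ⬝ᵥ P *ᵥ θ)

/-- The constant `γ` of the estimate `V̇ ≤ -γ ‖v‖²` for the Lyapunov function `V`. -/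
noncomputable def decayRate (α₁ α₂ α₃ kθ lam kn2 kn3 : ℝ) : ℝ :=
  min (min α₁ (min α₂ α₃) - 1 / (4 * kn3)) (kθ * lam - 1 / (4 * kn2))

theorem decayRate_pos {lam kn2 kn3 : ℝ} (hα₁ : 0 < α₁) (hα₂ : 0 < α₂) (hα₃ : 0 < α₃) (hkθ : 0 < kθ)
    (hlam : 0 < lam) (hkn2 : 0 < kn2) (hkn3 : 0 < kn3) (hgain2 : 1 / (4 * kθ * lam) < kn2)
    (hgain3 : 1 / (4 * min α₁ (min α₂ α₃)) < kn3) :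
    0 < decayRate α₁ α₂ α₃ kθ lam kn2 kn3 := by
  have hα : 0 < min α₁ (min α₂ α₃) := lt_min hα₁ (lt_min hα₂ hα₃)
  rw [div_lt_iff₀ (by positivity)] at hgain2 hgain3
  refine lt_min (sub_pos.2 ?_) (sub_pos.2 ?_) <;> rw [div_lt_iff₀ (by positivity)] <;> linarith

theorem lyapunov_between {κ₁ κ₂ m₁ m₂ g₁ g₂ : ℝ} {M : Matrix (Fin n) (Fin n) ℝ}
    (hK : QuadFormBetween κ₁ κ₂ K) (hM : QuadFormBetween m₁ m₂ M) (hP : QuadFormBetween g₁ g₂ P)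
    (e f η : Fin n → ℝ) (θ : Fin p → ℝ) :
    1 / 2 * min κ₁ (min m₁ g₁) * (eunorm e ^ 2 + eunorm f ^ 2 + eunorm η ^ 2 + eunorm θ ^ 2) ≤
        lyapunov K M P e f η θ ∧
      lyapunov K M P e f η θ ≤
        1 / 2 * max κ₂ (max m₂ g₂) *
          (eunorm e ^ 2 + eunorm f ^ 2 + eunorm η ^ 2 + eunorm θ ^ 2) := by
  have hK := hK.mono (min_le_left κ₁ (min m₁ g₁)) (le_max_left κ₂ (max m₂ g₂))
  have hM := hM.mono ((min_le_right κ₁ _).trans (min_le_left m₁ g₁))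
    ((le_max_left m₂ g₂).trans (le_max_right κ₂ _))
  have hP := hP.mono ((min_le_right κ₁ _).trans (min_le_right m₁ g₁))
    ((le_max_right m₂ g₂).trans (le_max_right κ₂ _))
  unfold lyapunov
  constructor <;> linarith [hK e, hK f, hM η, hP θ]

theorem hasDerivWithinAt_lyapunov {M : ℝ → Matrix (Fin n) (Fin n) ℝ} {M' : Matrix (Fin n) (Fin n) ℝ}
    {e f η : ℝ → Fin n → ℝ} {e' f' η' : Fin n → ℝ} {θ : ℝ → Fin p → ℝ} {θ' : Fin p → ℝ}
    {s : Set ℝ} {t : ℝ} (hK : K.IsSymm) (hMt : (M t).IsSymm) (hP : P.IsSymm)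
    (he : HasDerivWithinAt e e' s t) (hf : HasDerivWithinAt f f' s t)
    (hη : HasDerivWithinAt η η' s t) (hθ : HasDerivWithinAt θ θ' s t)
    (hM : ∀ i j, HasDerivWithinAt (fun r => M r i j) (M' i j) s t) :
    HasDerivWithinAt (fun r => lyapunov K (M r) P (e r) (f r) (η r) (θ r))
      (e t ⬝ᵥ K *ᵥ e' + f t ⬝ᵥ K *ᵥ f' + (1 / 2 * (η t ⬝ᵥ M' *ᵥ η t) + η t ⬝ᵥ M t *ᵥ η') +
        θ t ⬝ᵥ P *ᵥ θ') s t := by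
  have hsum := ((((hasDerivWithinAt_quadForm_const hK he).fun_add
    (hasDerivWithinAt_quadForm_const hK hf)).fun_add
    (hasDerivWithinAt_quadForm hMt hM hη)).fun_add
    (hasDerivWithinAt_quadForm_const hP hθ)).const_mul (1 / 2)
  exact hsum.congr_deriv (by ring)

theorem lyapunov_deriv_eq {M M' C : Matrix (Fin n) (Fin n) ℝ} {Y : Matrix (Fin n) (Fin p) ℝ}
    {S : Matrix (Fin p) (Fin p) ℝ} {e f η η' χ : Fin n → ℝ} {θ ω : Fin p → ℝ} (hK : K.IsSymm)
    (hPΓ : P * Γ = 1) (hskew : η ⬝ᵥ (M' - (2 : ℝ) • C) *ᵥ η = 0)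
    (hη : M *ᵥ η' = -(C *ᵥ η) - (α₂ * k) • (M *ᵥ η) + Y *ᵥ θ + χ + k • (K *ᵥ f) - K *ᵥ e) :
    e ⬝ᵥ K *ᵥ (η - α₁ • e - α₂ • f) + f ⬝ᵥ K *ᵥ (-α₃ • f + α₂ • e - k • η) +
        (1 / 2 * (η ⬝ᵥ M' *ᵥ η) + η ⬝ᵥ M *ᵥ η') +
        θ ⬝ᵥ P *ᵥ (-(Γ *ᵥ Yᵀ *ᵥ η) - kθ • (Γ *ᵥ ω) - kθ • (Γ *ᵥ S *ᵥ θ)) =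
      -α₁ * (e ⬝ᵥ K *ᵥ e) - α₃ * (f ⬝ᵥ K *ᵥ f) - α₂ * k * (η ⬝ᵥ M *ᵥ η) +
        η ⬝ᵥ χ - kθ * (θ ⬝ᵥ ω) - kθ * (θ ⬝ᵥ S *ᵥ θ) := by
  have hPΓmulVec (w : Fin p → ℝ) : P *ᵥ Γ *ᵥ w = w := by rw [mulVec_mulVec, hPΓ, one_mulVec]
  have hKcomm := dotProduct_mulVec_comm_of_isSymm hK
  rw [sub_mulVec, smul_mulVec, dotProduct_sub, dotProduct_smul, smul_eq_mul] at hskew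
  rw [hη]
  simp only [mulVec_add, mulVec_sub, mulVec_neg, mulVec_smul, hPΓmulVec, dotProduct_add,
    dotProduct_sub, dotProduct_neg, dotProduct_smul, smul_eq_mul,
    dotProduct_transpose_mulVec Y θ η, hKcomm f e, hKcomm η e, hKcomm η f]
  linear_combination (1 / 2) * hskew

theorem lyapunov_deriv_le {lam kn2 kn3 κ₁ κ₂ m₁ m₂ b r : ℝ} {M : Matrix (Fin n) (Fin n) ℝ}
    {S : Matrix (Fin p) (Fin p) ℝ} {e f η χ : Fin n → ℝ} {θ ω : Fin p → ℝ} (hα₁ : 1 ≤ α₁)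
    (hα₂k : 0 ≤ α₂ * k) (hα₃ : 1 ≤ α₃) (hkθ : 0 ≤ kθ) (hkn2 : 0 < kn2) (hkn3 : 0 < kn3)
    (hK : QuadFormBetween κ₁ κ₂ K) (hM : QuadFormBetween m₁ m₂ M)
    (hS : lam * eunorm θ ^ 2 ≤ θ ⬝ᵥ S *ᵥ θ)
    (hχ : eunorm χ ≤ r * √(eunorm e ^ 2 + eunorm f ^ 2 + eunorm η ^ 2))
    (hω : eunorm ω ≤ b * √(eunorm e ^ 2 + eunorm f ^ 2 + eunorm η ^ 2))
    (hgainK : 1 + kn2 * (kθ * b) ^ 2 ≤ κ₁)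
    (hgaink : α₂ + kn2 * (kθ * b) ^ 2 + kn3 * r ^ 2 ≤ α₂ * k * m₁) :
    -α₁ * (e ⬝ᵥ K *ᵥ e) - α₃ * (f ⬝ᵥ K *ᵥ f) - α₂ * k * (η ⬝ᵥ M *ᵥ η) +
        η ⬝ᵥ χ - kθ * (θ ⬝ᵥ ω) - kθ * (θ ⬝ᵥ S *ᵥ θ) ≤
      -decayRate α₁ α₂ α₃ kθ lam kn2 kn3 *
        (eunorm e ^ 2 + eunorm f ^ 2 + eunorm η ^ 2 + eunorm θ ^ 2) := by
  set γ := decayRate α₁ α₂ α₃ kθ lam kn2 kn3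
  set c := min α₁ (min α₂ α₃)
  set β := kn2 * (kθ * b) ^ 2
  have hcα₁ : c ≤ α₁ := min_le_left _ _
  have hcα₂ : c ≤ α₂ := (min_le_right _ _).trans (min_le_left _ _)
  have hcα₃ : c ≤ α₃ := (min_le_right _ _).trans (min_le_right _ _)
  have hγz : γ ≤ c - 1 / (4 * kn3) := min_le_left _ _
  have hγθ : γ ≤ kθ * lam - 1 / (4 * kn2) := min_le_right _ _
  have hβ : 0 ≤ β := by positivity
  have he := hK.add_mul_sq_le hα₁ hcα₁ hβ hgainK e
  have hf := hK.add_mul_sq_le hα₃ hcα₃ hβ hgainK f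
  have hη : (c + β + kn3 * r ^ 2) * eunorm η ^ 2 ≤ α₂ * k * (η ⬝ᵥ M *ᵥ η) := calc
    _ ≤ α₂ * k * m₁ * eunorm η ^ 2 := by gcongr; linarith
    _ = α₂ * k * (m₁ * eunorm η ^ 2) := mul_assoc _ _ _
    _ ≤ α₂ * k * (η ⬝ᵥ M *ᵥ η) := mul_le_mul_of_nonneg_left (hM η).1 hα₂k
  have hθ := mul_le_mul_of_nonneg_left hS hkθ
  have hηχ := dotProduct_le_of_eunorm_le (u := η) hkn3 hχ
  have hθω : -(kθ * (θ ⬝ᵥ ω)) ≤ β * _ + _ := neg_mul_dotProduct_le_of_eunorm_le hkθ hkn2 hω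
  rw [Real.sq_sqrt (by positivity)] at hηχ hθω
  calc
    _ ≤ -(c - 1 / (4 * kn3)) * (eunorm e ^ 2 + eunorm f ^ 2 + eunorm η ^ 2) -
        (kθ * lam - 1 / (4 * kn2)) * eunorm θ ^ 2 := by linarith
    _ ≤ -γ * (eunorm e ^ 2 + eunorm f ^ 2 + eunorm η ^ 2) - γ * eunorm θ ^ 2 := by gcongr
    _ = _ := by ring

end ClosedLoop

/-- `P` stands for `Γ⁻¹`, `κ₁, κ₂` and `g₁, g₂` for bounds on the eigenvalues of `K` and `P`. The
data stack enters through `S = Σ 𝒴ᵢᵀ 𝒴ᵢ` and `ω = Σ 𝒴ᵢᵀ Ωᵢ`, and `b` is `N λ_d ρ̄₃`. -/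
theorem ofb_gradient_concurrent_learning_exponential_convergence_general {n p : ℕ}
    {α₁ α₂ α₃ k kθ κ₁ κ₂ m₁ m₂ g₁ g₂ lam b kn2 kn3 : ℝ}
    (hα₁ : 1 ≤ α₁) (hα₂ : 0 < α₂) (hα₃ : 1 ≤ α₃) (hk : 0 < k) (hkθ : 0 < kθ)
    (hm₁ : 0 < m₁) (hm₁₂ : m₁ ≤ m₂) (hg₁ : 0 < g₁) (hlam : 0 < lam) (hkn2 : 0 < kn2)
    (hkn3 : 0 < kn3)
    {K : Matrix (Fin n) (Fin n) ℝ} {P Γ : Matrix (Fin p) (Fin p) ℝ}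
    (hKsymm : K.IsSymm) (hPsymm : P.IsSymm) (hPΓ : P * Γ = 1)
    (hK : QuadFormBetween κ₁ κ₂ K) (hP : QuadFormBetween g₁ g₂ P)
    {M M' C : ℝ → Matrix (Fin n) (Fin n) ℝ} (hMsymm : ∀ t, 0 ≤ t → (M t).IsSymm)
    (hM : ∀ t, 0 ≤ t → QuadFormBetween m₁ m₂ (M t))
    (hM' : ∀ t, 0 ≤ t → ∀ i j, HasDerivWithinAt (fun s => M s i j) (M' t i j) (Set.Ici 0) t)
    (hskew : ∀ t, 0 ≤ t → ∀ ξ : Fin n → ℝ, ξ ⬝ᵥ (M' t - (2 : ℝ) • C t) *ᵥ ξ = 0)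
    {Y : ℝ → Matrix (Fin n) (Fin p) ℝ} {S : Matrix (Fin p) (Fin p) ℝ}
    (hS : ∀ ξ : Fin p → ℝ, lam * eunorm ξ ^ 2 ≤ ξ ⬝ᵥ S *ᵥ ξ)
    {e f η η' χ : ℝ → Fin n → ℝ} {θ ω : ℝ → Fin p → ℝ} {r : ℝ → ℝ}
    (hχ : ∀ t, 0 ≤ t →
      eunorm (χ t) ≤ r t * √(eunorm (e t) ^ 2 + eunorm (f t) ^ 2 + eunorm (η t) ^ 2))
    (hω : ∀ t, 0 ≤ t →
      eunorm (ω t) ≤ b * √(eunorm (e t) ^ 2 + eunorm (f t) ^ 2 + eunorm (η t) ^ 2))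
    (he : ∀ t, 0 ≤ t → HasDerivWithinAt e (η t - α₁ • e t - α₂ • f t) (Set.Ici 0) t)
    (hf : ∀ t, 0 ≤ t → HasDerivWithinAt f (-α₃ • f t + α₂ • e t - k • η t) (Set.Ici 0) t)
    (hη : ∀ t, 0 ≤ t → HasDerivWithinAt η (η' t) (Set.Ici 0) t)
    (hηdyn : ∀ t, 0 ≤ t → M t *ᵥ η' t =
      -(C t *ᵥ η t) - (α₂ * k) • (M t *ᵥ η t) + Y t *ᵥ θ t + χ t + k • (K *ᵥ f t) - K *ᵥ e t)
    (hθ : ∀ t, 0 ≤ t → HasDerivWithinAt θ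
      (-(Γ *ᵥ (Y t)ᵀ *ᵥ η t) - kθ • (Γ *ᵥ ω t) - kθ • (Γ *ᵥ S *ᵥ θ t)) (Set.Ici 0) t)
    (hgainK : 1 + kn2 * (kθ * b) ^ 2 ≤ κ₁)
    (hgaink : ∀ t, 0 ≤ t → α₂ + kn2 * (kθ * b) ^ 2 + kn3 * r t ^ 2 ≤ α₂ * k * m₁)
    (hgain2 : 1 / (4 * kθ * lam) < kn2) (hgain3 : 1 / (4 * min α₁ (min α₂ α₃)) < kn3)
    {t : ℝ} (ht : 0 ≤ t) :
    √(eunorm (e t) ^ 2 + eunorm (f t) ^ 2 + eunorm (η t) ^ 2 + eunorm (θ t) ^ 2) ≤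
      √((1 / 2 * max κ₂ (max m₂ g₂)) / (1 / 2 * min κ₁ (min m₁ g₁))) *
        √(eunorm (e 0) ^ 2 + eunorm (f 0) ^ 2 + eunorm (η 0) ^ 2 + eunorm (θ 0) ^ 2) *
        Real.exp (-(decayRate α₁ α₂ α₃ kθ lam kn2 kn3 / 2 /
          (1 / 2 * max κ₂ (max m₂ g₂))) * t) := by
  have hκ₁ : 0 < κ₁ := lt_of_lt_of_le (by positivity) hgainK
  have hm₂ : 0 < m₂ := hm₁.trans_le hm₁₂
  have hlower : 0 < 1 / 2 * min κ₁ (min m₁ g₁) := by positivity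
  have hupper : 0 < 1 / 2 * max κ₂ (max m₂ g₂) :=
    mul_pos one_half_pos (lt_max_of_lt_right (lt_max_of_lt_left hm₂))
  have hγ := decayRate_pos (zero_lt_one.trans_le hα₁) hα₂ (zero_lt_one.trans_le hα₃) hkθ hlam
    hkn2 hkn3 hgain2 hgain3
  refine sqrt_le_mul_exp_of_lyapunov
    (W := fun t => eunorm (e t) ^ 2 + eunorm (f t) ^ 2 + eunorm (η t) ^ 2 + eunorm (θ t) ^ 2)
    hlower hupper hγ.le (by positivity)
    (fun t ht => hasDerivWithinAt_lyapunov hKsymm (hMsymm t ht) hPsymm (he t ht) (hf t ht)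
      (hη t ht) (hθ t ht) (hM' t ht))
    (fun t ht => lyapunov_between hK (hM t ht) hP _ _ _ _) (fun t ht => ?_) ht
  rw [lyapunov_deriv_eq hKsymm hPΓ (hskew t ht (η t)) (hηdyn t ht)]
  exact lyapunov_deriv_le hα₁ (by positivity) hα₃ hkθ.le hkn2 hkn3 hK (hM t ht) (hS _) (hχ t ht)
    (hω t ht) hgainK (hgaink t ht)

/-- Theorem 2, output-feedback gradient adaptation based
concurrent learning. Under the stated gain conditions, every solution of the
closed-loop output-feedback system satisfies
`‖v(t)‖ ≤ √(λ₄/λ₃) ‖v(0)‖ exp(-(γ₁/λ₄) t)` for all `t ≥ 0` and some constant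
`γ₁ > 0`, where `v = (e, e_f, η, θ̃)`,
`λ₃ = ½ min{λmin(Ks), m₁, λmin(Γ⁻¹)}` and `λ₄ = ½ max{λmax(Ks), m₂, λmax(Γ⁻¹)}`;
in particular `e` and `θ̃` converge exponentially to zero. -/
theorem ofb_gradient_concurrent_learning_exponential_convergence
    {n p N : ℕ} [NeZero n] [NeZero p]
    -- constants
    (α₁ α₂ α₃ k kθ m₁ m₂ lam lamd ρbar₃ kn2 kn3 : ℝ)
    (hα₁ : 0 < α₁) (hα₂ : 0 < α₂) (hα₃ : 0 < α₃) (hk : 0 < k)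
    (hkθ : 0 < kθ) (hm₁ : 0 < m₁) (hm₁₂ : m₁ ≤ m₂)
    (hlam : 0 < lam) (hlamd : 0 ≤ lamd) (hρbar₃ : 0 ≤ ρbar₃)
    (hkn2 : 0 < kn2) (hkn3 : 0 < kn3)
    -- diagonal positive definite gain matrices `Ks = diagonal ks`, `Γ = diagonal g`
    (ks : Fin n → ℝ) (g : Fin p → ℝ)
    (hks : ∀ i, 0 < ks i) (hg : ∀ i, 0 < g i)
    -- state error signals and their derivatives
    (e ef η e' ef' η' : ℝ → Fin n → ℝ)
    (θtil θtil' : ℝ → Fin p → ℝ)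
    (he : ∀ t, 0 ≤ t → HasDerivAt e (e' t) t)
    (hef : ∀ t, 0 ≤ t → HasDerivAt ef (ef' t) t)
    (hη : ∀ t, 0 ≤ t → HasDerivAt η (η' t) t)
    (hθ : ∀ t, 0 ≤ t → HasDerivAt θtil (θtil' t) t)
    -- surrogate filter relations: ė = η - α₁ e - α₂ e_f, ė_f = -α₃ e_f + α₂ e - k η
    (hedyn : ∀ t, 0 ≤ t → e' t = η t - α₁ • e t - α₂ • ef t)
    (hefdyn : ∀ t, 0 ≤ t → ef' t = -α₃ • ef t + α₂ • e t - k • η t)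
    -- inertia matrix, its derivative, and centripetal-Coriolis matrix
    (M M' C : ℝ → Matrix (Fin n) (Fin n) ℝ)
    (hM : ∀ t, 0 ≤ t → ∀ i j, HasDerivAt (fun s => M s i j) (M' t i j) t)
    (hMsymm : ∀ t, 0 ≤ t → (M t).IsHermitian)
    (hMlower : ∀ t, 0 ≤ t → ∀ ξ : Fin n → ℝ,
      m₁ * (eunorm ξ) ^ 2 ≤ ξ ⬝ᵥ (M t).mulVec ξ)
    (hMupper : ∀ t, 0 ≤ t → ∀ ξ : Fin n → ℝ,
      ξ ⬝ᵥ (M t).mulVec ξ ≤ m₂ * (eunorm ξ) ^ 2)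
    -- skew-symmetry property: ξᵀ(Ṁ - 2C)ξ = 0
    (hskew : ∀ t, 0 ≤ t → ∀ ξ : Fin n → ℝ,
      ξ ⬝ᵥ (M' t - (2 : ℝ) • C t).mulVec ξ = 0)
    -- desired regression matrix
    (Yd : ℝ → Matrix (Fin n) (Fin p) ℝ) (hYd : Continuous Yd)
    -- auxiliary term χ with its bound ‖χ(t)‖ ≤ ρ₄(t) ‖z(t)‖, z = (e, e_f, η)
    (χ : ℝ → Fin n → ℝ) (ρ₄ : ℝ → ℝ) (hρ₄ : ∀ t, 0 ≤ ρ₄ t)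
    (hχ : ∀ t, 0 ≤ t → eunorm (χ t) ≤
      ρ₄ t * Real.sqrt ((eunorm (e t)) ^ 2 + (eunorm (ef t)) ^ 2 + (eunorm (η t)) ^ 2))
    -- concurrent-learning data stack
    (𝒴 : Fin N → Matrix (Fin n) (Fin p) ℝ)
    (Ω : Fin N → ℝ → Fin n → ℝ)
    -- bound ‖Σᵢ 𝒴ᵢᵀ Ωᵢ(t)‖ ≤ N λd ρ̄₃ ‖z(t)‖
    (hΩ : ∀ t, 0 ≤ t →
      eunorm (∑ i, ((𝒴 i)ᵀ).mulVec (Ω i t)) ≤ (N : ℝ) * lamd * ρbar₃ *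
        Real.sqrt ((eunorm (e t)) ^ 2 + (eunorm (ef t)) ^ 2 + (eunorm (η t)) ^ 2))
    -- λmin(Σᵢ 𝒴ᵢᵀ 𝒴ᵢ) ≥ λ̲ > 0
    (hstack : ∀ ξ : Fin p → ℝ,
      lam * (eunorm ξ) ^ 2 ≤ ξ ⬝ᵥ (∑ i, (𝒴 i)ᵀ * 𝒴 i).mulVec ξ)
    -- closed-loop dynamics: M η̇ = -C η - α₂ k M η + Y_d θ̃ + χ + k Ks e_f - Ks e
    (hηdyn : ∀ t, 0 ≤ t → (M t).mulVec (η' t) =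
      -((C t).mulVec (η t)) - (α₂ * k) • ((M t).mulVec (η t))
        + (Yd t).mulVec (θtil t) + χ t
        + k • ((Matrix.diagonal ks).mulVec (ef t))
        - (Matrix.diagonal ks).mulVec (e t))
    -- parameter-estimation-error dynamics
    (hθdyn : ∀ t, 0 ≤ t → θtil' t =
      -((Matrix.diagonal g).mulVec (((Yd t)ᵀ).mulVec (η t)))
        - kθ • ((Matrix.diagonal g).mulVec (∑ i, ((𝒴 i)ᵀ).mulVec (Ω i t)))
        - kθ • ((Matrix.diagonal g).mulVec ((∑ i, (𝒴 i)ᵀ * 𝒴 i).mulVec (θtil t))))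
    -- gain conditions
    (hgainKs : (⨅ i, ks i) ≥ 1 + kn2 * (kθ * ρbar₃ * (N : ℝ) * lamd) ^ 2)
    (hgaink : ∀ t, 0 ≤ t →
      α₂ * k * m₁ ≥ α₂ + kn2 * (kθ * ρbar₃ * (N : ℝ) * lamd) ^ 2 + kn3 * (ρ₄ t) ^ 2)
    (hα₁₃ : min α₁ α₃ ≥ 1)
    (hgain2 : kn2 > 1 / (4 * kθ * lam))
    (hgain3 : kn3 > 1 / (4 * min α₁ (min α₂ α₃))) :
    -- ∃ γ₁ > 0 with ‖v(t)‖ ≤ √(λ₄/λ₃) ‖v(0)‖ exp(-(γ₁/λ₄) t)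
    ∃ γ₁ : ℝ, 0 < γ₁ ∧
      ∀ t, 0 ≤ t →
        Real.sqrt ((eunorm (e t)) ^ 2 + (eunorm (ef t)) ^ 2 + (eunorm (η t)) ^ 2 +
            (eunorm (θtil t)) ^ 2) ≤
          Real.sqrt
              ((1 / 2 * max (⨆ i, ks i) (max m₂ (⨆ i, (g i)⁻¹))) /
                (1 / 2 * min (⨅ i, ks i) (min m₁ (⨅ i, (g i)⁻¹)))) *
            Real.sqrt ((eunorm (e 0)) ^ 2 + (eunorm (ef 0)) ^ 2 + (eunorm (η 0)) ^ 2 +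
              (eunorm (θtil 0)) ^ 2) *
            Real.exp
              (-(γ₁ / (1 / 2 * max (⨆ i, ks i) (max m₂ (⨆ i, (g i)⁻¹)))) * t) := by
  have hb : kθ * ρbar₃ * (N : ℝ) * lamd = kθ * ((N : ℝ) * lamd * ρbar₃) := by ring
  rw [hb] at hgainKs
  simp only [hb] at hgaink
  obtain ⟨hα₁_one, hα₃_one⟩ := le_min_iff.1 hα₁₃
  have hginv : 0 < ⨅ i, (g i)⁻¹ := by
    obtain ⟨i, hi⟩ := exists_eq_ciInf_of_finite (f := fun i => (g i)⁻¹)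
    exact hi ▸ inv_pos.2 (hg i)
  have hinv : diagonal (fun i => (g i)⁻¹) * diagonal g = 1 := by
    simp only [diagonal_mul_diagonal, inv_mul_cancel₀ (hg _).ne', diagonal_one]
  exact ⟨_, half_pos (decayRate_pos hα₁ hα₂ hα₃ hkθ hlam hkn2 hkn3 hgain2 hgain3), fun t ht =>
    ofb_gradient_concurrent_learning_exponential_convergence_general hα₁_one hα₂ hα₃_one hk hkθ
      hm₁ hm₁₂ hginv hlam hkn2 hkn3 (isSymm_diagonal ks) (isSymm_diagonal _) hinv
      (quadFormBetween_diagonal ks) (quadFormBetween_diagonal _)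
      (fun t ht => isHermitian_iff_isSymm.1 (hMsymm t ht))
      (fun t ht ξ => ⟨hMlower t ht ξ, hMupper t ht ξ⟩)
      (fun t ht i j => (hM t ht i j).hasDerivWithinAt) hskew hstack hχ hΩ
      (fun t ht => hedyn t ht ▸ (he t ht).hasDerivWithinAt)
      (fun t ht => hefdyn t ht ▸ (hef t ht).hasDerivWithinAt)
      (fun t ht => (hη t ht).hasDerivWithinAt) hηdyn
      (fun t ht => hθdyn t ht ▸ (hθ t ht).hasDerivWithinAt) hgainKs hgaink hgain2 hgain3 ht⟩
end

section
/- (Appendix Lemma, full-state-feedback version.) If additionally e(0) = 0 and r(t) = ė(t) + α·e(t) for a constant α > 0, then there exist nonnegative constants ξ₁, ξ₂, ξ₃, depending only on β, α and the bounding constants m₂, ζ_{M1}, ζ_{C1}, ζ_{C2}, ζ_G, ζ_F, ζ_{d1}, such that for every t ≥ 0: ‖Ω(t)‖ ≤ (ξ₁ + ξ₂·E(t) + ξ₃·R(t))·R(t), where E(t) = sup_{0≤σ≤t} ‖e(σ)‖ and R(t) = sup_{0≤σ≤t} ‖r(σ)‖. -/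
open Matrix
open scoped BigOperators

/-!
Everything is linear in `R = sup ‖r‖`. Variation of constants for `ė = -α e + r` with `e(0) = 0`
gives `‖e‖ ≤ R / α`, hence `‖ė‖ ≤ 2 R`. The product estimate
`‖A x - B y‖ ≤ ‖A‖ ‖x - y‖ + ‖A - B‖ ‖y‖` bounds `h` and `g` by these two quantities; in `g` the
terms `C(q, q̇) q̇` cancel against half of `Ṁ(q) q̇ = (C + C†) q̇`, and the remaining `C†` has the
same norm as `C`. The kernel `β exp (-β (t - σ))` has total mass at most one on `[0, t]`, so
filtering preserves the bounds.
-/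

section NormedSpace

variable {E : Type*} [NormedAddCommGroup E] [NormedSpace ℝ E]

theorem norm_clm_apply_sub_apply_le {F : Type*} [NormedAddCommGroup F] [NormedSpace ℝ F]
    (A B : E →L[ℝ] F) (x y : E) : ‖A x - B y‖ ≤ ‖A‖ * ‖x - y‖ + ‖A - B‖ * ‖y‖ :=
  calc ‖A x - B y‖ = ‖A (x - y) + (A - B) y‖ := by
        rw [map_sub, _root_.sub_apply, sub_add_sub_cancel]
    _ ≤ ‖A‖ * ‖x - y‖ + ‖A - B‖ * ‖y‖ := norm_add_le_of_le (A.le_opNorm _) ((A - B).le_opNorm _)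

theorem norm_le_of_norm_deriv_add_smul_le {e e' : ℝ → E} {α K a b : ℝ}
    (he : ContinuousOn e (Set.Icc a b))
    (he' : ∀ s ∈ Set.Ico a b, HasDerivWithinAt e (e' s) (Set.Ici s) s)
    (ha : ‖e a‖ ≤ K) (hK : ∀ s ∈ Set.Ico a b, ‖e' s + α • e s‖ ≤ α * K)
    {s : ℝ} (hs : s ∈ Set.Icc a b) : ‖e s‖ ≤ K := by
  have hexp (s : ℝ) : HasDerivAt (fun s ↦ Real.exp (α * s)) (Real.exp (α * s) * α) s := by
    simpa using ((hasDerivAt_id s).const_mul α).exp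
  have hnorm (s : ℝ) (x : E) : ‖Real.exp (α * s) • x‖ = Real.exp (α * s) * ‖x‖ := by
    rw [norm_smul, Real.norm_of_nonneg (Real.exp_nonneg _)]
  have hderiv : ∀ s ∈ Set.Ico a b, HasDerivWithinAt (fun s ↦ Real.exp (α * s) • e s)
      (Real.exp (α * s) • (e' s + α • e s)) (Set.Ici s) s := fun s hs ↦
    ((hexp s).hasDerivWithinAt.smul (he' s hs)).congr_deriv (by rw [smul_add, mul_smul])
  have hbarrier : ‖Real.exp (α * s) • e s‖ ≤ Real.exp (α * s) * K :=
    image_norm_le_of_norm_deriv_right_le_deriv_boundary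
      (f := fun s ↦ Real.exp (α * s) • e s) (B := fun s ↦ Real.exp (α * s) * K)
      (by fun_prop) hderiv (by rw [hnorm]; gcongr) (fun s ↦ (hexp s).mul_const K)
      (fun s hs ↦ by rw [hnorm, mul_assoc]; gcongr; exact hK s hs) hs
  rw [hnorm] at hbarrier
  exact le_of_mul_le_mul_left hbarrier (Real.exp_pos _)

theorem norm_le_div_and_norm_deriv_le_two_mul {e e' : ℝ → E} {α R t : ℝ} (hα : 0 < α)
    (he : ∀ s ∈ Set.Ici 0, HasDerivWithinAt e (e' s) (Set.Ici 0) s) (he0 : e 0 = 0)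
    (hR : ∀ s ∈ Set.Icc 0 t, ‖e' s + α • e s‖ ≤ R) {s : ℝ} (hs : s ∈ Set.Icc 0 t) :
    ‖e s‖ ≤ R / α ∧ ‖e' s‖ ≤ 2 * R := by
  have hR0 : 0 ≤ R := (norm_nonneg _).trans (hR s hs)
  have hRα : α * (R / α) = R := mul_div_cancel₀ R hα.ne'
  have hes : ‖e s‖ ≤ R / α := norm_le_of_norm_deriv_add_smul_le
    (fun s hs ↦ (he s hs.1).continuousWithinAt.mono Set.Icc_subset_Ici_self)
    (fun s hs ↦ (he s hs.1).mono (Set.Ici_subset_Ici.2 hs.1))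
    (by rw [he0, norm_zero]; positivity)
    (fun s hs ↦ hRα.symm ▸ hR s (Set.Ico_subset_Icc_self hs)) hs
  refine ⟨hes, ?_⟩
  calc ‖e' s‖ = ‖(e' s + α • e s) - α • e s‖ := by rw [add_sub_cancel_right]
    _ ≤ R + α * (R / α) := by
      refine norm_sub_le_of_le (hR s hs) ?_
      rw [norm_smul, Real.norm_of_nonneg hα.le]
      gcongr
    _ = 2 * R := by rw [hRα, two_mul]

theorem integral_exp_kernel (β t : ℝ) :
    ∫ σ in (0 : ℝ)..t, β * Real.exp (-β * (t - σ)) = 1 - Real.exp (-β * t) := by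
  have hderiv (σ : ℝ) : HasDerivAt (fun σ ↦ Real.exp (-β * (t - σ)))
      (β * Real.exp (-β * (t - σ))) σ :=
    (((hasDerivAt_id σ).const_sub t).const_mul (-β)).exp.congr_deriv (by simp [mul_comm])
  rw [intervalIntegral.integral_eq_sub_of_hasDerivAt (fun σ _ ↦ hderiv σ)
    (Continuous.intervalIntegrable (by fun_prop) _ _)]
  simp

theorem norm_integral_exp_kernel_smul_le {f : ℝ → E} {β t K : ℝ} (hβ : 0 ≤ β) (ht : 0 ≤ t)
    (hf : ∀ σ ∈ Set.Icc 0 t, ‖f σ‖ ≤ K) :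
    ‖∫ σ in (0 : ℝ)..t, (β * Real.exp (-β * (t - σ))) • f σ‖ ≤ (1 - Real.exp (-β * t)) * K := by
  rw [← integral_exp_kernel, ← intervalIntegral.integral_mul_const]
  refine intervalIntegral.norm_integral_le_of_norm_le ht (.of_forall fun σ hσ ↦ ?_)
    (Continuous.intervalIntegrable (by fun_prop) _ _)
  rw [norm_smul, Real.norm_of_nonneg (by positivity)]
  gcongr
  exact hf σ (Set.Ioc_subset_Icc_self hσ)

end NormedSpace

/-- The coefficients of the Euler–Lagrange dynamics `M(q) q̈ + C(q, q̇) q̇ + G(q) + F q̇ = τ`, with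
configuration space an inner product space. Linearity of `C` in the velocity is built into its
type. -/
structure EulerLagrange (E : Type*) [NormedAddCommGroup E] [InnerProductSpace ℝ E] where
  inertia : E → E →L[ℝ] E
  coriolis : E → E →L[ℝ] E →L[ℝ] E
  gravity : E → E
  friction : E →L[ℝ] E

namespace EulerLagrange

open scoped NNReal

section Estimates

variable {E : Type*} [NormedAddCommGroup E] [InnerProductSpace ℝ E]

/-- The bounding constants of the dynamics; `ζC` bounds `C` and `ζC'` is its Lipschitz constant in
the position (`ζ_{C1}` and `ζ_{C2}` in the paper). -/
structure IsBounded (D : EulerLagrange E) (m ζM ζC ζC' ζG ζF : ℝ≥0) : Prop where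
  norm_inertia_le : ∀ a, ‖D.inertia a‖ ≤ m
  lipschitz_inertia : LipschitzWith ζM D.inertia
  norm_coriolis_le : ∀ a, ‖D.coriolis a‖ ≤ ζC
  lipschitz_coriolis : LipschitzWith ζC' D.coriolis
  lipschitz_gravity : LipschitzWith ζG D.gravity
  norm_friction_le : ‖D.friction‖ ≤ ζF

/-- The difference `h` of the generalized momenta of the states `(a, w)` and `(b, v)`, each a pair
of a position and a velocity. -/
def momentumError (D : EulerLagrange E) (a w b v : E) : E := D.inertia a w - D.inertia b v

variable {D : EulerLagrange E} {m ζM ζC ζC' ζG ζF : ℝ≥0}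

theorem IsBounded.norm_momentumError_le (hD : D.IsBounded m ζM ζC ζC' ζG ζF) (a w b v : E) :
    ‖D.momentumError a w b v‖ ≤ m * ‖w - v‖ + ζM * ‖a - b‖ * ‖v‖ := by
  refine (norm_clm_apply_sub_apply_le _ _ w v).trans ?_
  gcongr
  exacts [hD.norm_inertia_le a, hD.lipschitz_inertia.norm_sub_le a b]

variable [CompleteSpace E]

/-- The difference `g` of the remaining generalized forces in the states `(a, w)` and `(b, v)`.
The derivative of the inertia along a trajectory enters as `C + C†`. -/
noncomputable def forceError (D : EulerLagrange E) (a w b v : E) : E :=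
  -((D.coriolis a w + (D.coriolis a w).adjoint) w) + (D.coriolis b v + (D.coriolis b v).adjoint) v
    + D.coriolis a w w - D.coriolis b v v + D.gravity a - D.gravity b + D.friction (w - v)

/-- The filtered error `Ω` between the trajectory `q` and the desired one `qd`, with velocities `q'`
and `qd'`, for the filter kernel `f(t) = β exp (-β t)`. -/
noncomputable def omega (D : EulerLagrange E) (β : ℝ) (q q' qd qd' : ℝ → E) (t : ℝ) : E :=
  (∫ σ in (0 : ℝ)..t, (-β ^ 2 * Real.exp (-β * (t - σ))) •
      D.momentumError (q σ) (q' σ) (qd σ) (qd' σ))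
    + β • D.momentumError (q t) (q' t) (qd t) (qd' t)
    - (β * Real.exp (-β * t)) • D.momentumError (q 0) (q' 0) (qd 0) (qd' 0)
    + ∫ σ in (0 : ℝ)..t, (β * Real.exp (-β * (t - σ))) •
      D.forceError (q σ) (q' σ) (qd σ) (qd' σ)

theorem forceError_eq (D : EulerLagrange E) (a w b v : E) :
    D.forceError a w b v = -((D.coriolis a w).adjoint w - (D.coriolis b v).adjoint v)
      + (D.gravity a - D.gravity b) + D.friction (w - v) := by
  simp only [forceError, _root_.add_apply]
  abel

theorem IsBounded.norm_adjoint_coriolis_sub_le (hD : D.IsBounded m ζM ζC ζC' ζG ζF)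
    (a w b v : E) :
    ‖(D.coriolis a w).adjoint w - (D.coriolis b v).adjoint v‖ ≤
      ζC * ‖w‖ * ‖w - v‖ + (ζC * ‖w - v‖ + ζC' * ‖a - b‖ * ‖v‖) * ‖v‖ := by
  have hdiff : ‖D.coriolis a w - D.coriolis b v‖ ≤ ζC * ‖w - v‖ + ζC' * ‖a - b‖ * ‖v‖ := by
    refine (norm_clm_apply_sub_apply_le _ _ w v).trans ?_
    gcongr
    exacts [hD.norm_coriolis_le a, hD.lipschitz_coriolis.norm_sub_le a b]
  refine (norm_clm_apply_sub_apply_le _ _ w v).trans ?_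
  rw [← map_sub, LinearIsometryEquiv.norm_map, LinearIsometryEquiv.norm_map]
  gcongr
  exact (D.coriolis a).le_of_opNorm_le (hD.norm_coriolis_le a) w

theorem IsBounded.norm_forceError_le (hD : D.IsBounded m ζM ζC ζC' ζG ζF) (a w b v : E) :
    ‖D.forceError a w b v‖ ≤
      ζC * ‖w‖ * ‖w - v‖ + (ζC * ‖w - v‖ + ζC' * ‖a - b‖ * ‖v‖) * ‖v‖
        + ζG * ‖a - b‖ + ζF * ‖w - v‖ := by
  rw [forceError_eq]
  refine norm_add_le_of_le (norm_add_le_of_le ?_ (hD.lipschitz_gravity.norm_sub_le a b))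
    (D.friction.le_of_opNorm_le hD.norm_friction_le _)
  rw [norm_neg]
  exact hD.norm_adjoint_coriolis_sub_le a w b v

variable {q q' qd qd' : ℝ → E} {β t : ℝ}

theorem norm_omega_le {H K : ℝ} (hβ : 0 ≤ β) (ht : 0 ≤ t)
    (hH : ∀ σ ∈ Set.Icc 0 t, ‖D.momentumError (q σ) (q' σ) (qd σ) (qd' σ)‖ ≤ H)
    (hK : ∀ σ ∈ Set.Icc 0 t, ‖D.forceError (q σ) (q' σ) (qd σ) (qd' σ)‖ ≤ K) :
    ‖D.omega β q q' qd qd' t‖ ≤ 2 * β * H + K := by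
  set h := fun σ ↦ D.momentumError (q σ) (q' σ) (qd σ) (qd' σ)
  have h0 : (0 : ℝ) ∈ Set.Icc 0 t := Set.left_mem_Icc.2 ht
  have hkernel : ∫ σ in (0 : ℝ)..t, (-β ^ 2 * Real.exp (-β * (t - σ))) • h σ =
      -(β • ∫ σ in (0 : ℝ)..t, (β * Real.exp (-β * (t - σ))) • h σ) := by
    rw [← intervalIntegral.integral_smul, ← intervalIntegral.integral_neg]
    simp only [smul_smul, ← neg_smul]
    ring_nf
  have hderiv : ‖∫ σ in (0 : ℝ)..t, (-β ^ 2 * Real.exp (-β * (t - σ))) • h σ‖ ≤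
      β * ((1 - Real.exp (-β * t)) * H) := by
    rw [hkernel, norm_neg, norm_smul, Real.norm_of_nonneg hβ]
    gcongr
    exact norm_integral_exp_kernel_smul_le hβ ht hH
  have hend : ‖β • h t‖ ≤ β * H := by
    rw [norm_smul, Real.norm_of_nonneg hβ]
    gcongr
    exact hH t (Set.right_mem_Icc.2 ht)
  have hstart : ‖(β * Real.exp (-β * t)) • h 0‖ ≤ β * Real.exp (-β * t) * H := by
    rw [norm_smul, Real.norm_of_nonneg (by positivity)]
    gcongr
    exact hH 0 h0
  have hforce := norm_integral_exp_kernel_smul_le hβ ht hK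
  have hK0 : 0 ≤ K := (norm_nonneg _).trans (hK 0 h0)
  calc ‖D.omega β q q' qd qd' t‖
      ≤ β * ((1 - Real.exp (-β * t)) * H) + β * H + β * Real.exp (-β * t) * H
          + (1 - Real.exp (-β * t)) * K :=
        norm_add_le_of_le (norm_sub_le_of_le (norm_add_le_of_le hderiv hend) hstart) hforce
    _ = 2 * β * H + K - Real.exp (-β * t) * K := by ring
    _ ≤ 2 * β * H + K := sub_le_self _ (by positivity)

theorem IsBounded.norm_omega_le (hD : D.IsBounded m ζM ζC ζC' ζG ζF) {ρ δ d : ℝ} (hβ : 0 ≤ β)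
    (ht : 0 ≤ t) (hρ : ∀ σ ∈ Set.Icc 0 t, ‖q σ - qd σ‖ ≤ ρ)
    (hδ : ∀ σ ∈ Set.Icc 0 t, ‖q' σ - qd' σ‖ ≤ δ) (hd : ∀ σ ∈ Set.Icc 0 t, ‖qd' σ‖ ≤ d) :
    ‖D.omega β q q' qd qd' t‖ ≤ 2 * β * (m * δ + ζM * ρ * d)
      + (ζC * (d + δ) * δ + (ζC * δ + ζC' * ρ * d) * d + ζG * ρ + ζF * δ) := by
  have h0 : (0 : ℝ) ∈ Set.Icc 0 t := Set.left_mem_Icc.2 ht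
  have hρ0 : 0 ≤ ρ := (norm_nonneg _).trans (hρ 0 h0)
  have hδ0 : 0 ≤ δ := (norm_nonneg _).trans (hδ 0 h0)
  have hd0 : 0 ≤ d := (norm_nonneg _).trans (hd 0 h0)
  refine EulerLagrange.norm_omega_le hβ ht (fun σ hσ ↦ ?_) fun σ hσ ↦ ?_
  · refine (hD.norm_momentumError_le _ _ _ _).trans ?_
    gcongr
    exacts [hδ σ hσ, hρ σ hσ, hd σ hσ]
  · have hvel : ‖q' σ‖ ≤ d + δ :=
      (norm_le_norm_add_norm_sub' _ _).trans (add_le_add (hd σ hσ) (hδ σ hσ))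
    refine (hD.norm_forceError_le _ _ _ _).trans ?_
    gcongr
    exacts [hδ σ hσ, hδ σ hσ, hρ σ hσ, hd σ hσ, hd σ hσ, hρ σ hσ, hδ σ hσ]

end Estimates

end EulerLagrange

open scoped NNReal in
theorem appendix_lemma_fsfb_general {E : Type*} [NormedAddCommGroup E] [InnerProductSpace ℝ E]
    [CompleteSpace E] {D : EulerLagrange E} {m ζM ζC ζC' ζG ζF : ℝ≥0}
    (hD : D.IsBounded m ζM ζC ζC' ζG ζF) {β α d : ℝ} (hβ : 0 ≤ β) (hα : 0 < α)
    {q q' qd qd' : ℝ → E}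
    (hq : ∀ s ∈ Set.Ici 0, HasDerivWithinAt q (q' s) (Set.Ici 0) s)
    (hqd : ∀ s ∈ Set.Ici 0, HasDerivWithinAt qd (qd' s) (Set.Ici 0) s)
    (hq' : ContinuousOn q' (Set.Ici 0)) (hqd' : ContinuousOn qd' (Set.Ici 0))
    (h0 : qd 0 = q 0) (hd : ∀ s ∈ Set.Ici 0, ‖qd' s‖ ≤ d) {t : ℝ} (ht : 0 ≤ t) :
    let R := sSup ((fun σ ↦ ‖(qd' σ - q' σ) + α • (qd σ - q σ)‖) '' Set.Icc 0 t)
    ‖D.omega β q q' qd qd' t‖ ≤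
      (2 * β * (2 * m + ζM * d / α) + (4 * ζC * d + ζC' * d ^ 2 / α + ζG / α + 2 * ζF)
        + 4 * ζC * R) * R := by
  intro R
  have hcont : ContinuousOn (fun σ ↦ ‖(qd' σ - q' σ) + α • (qd σ - q σ)‖) (Set.Icc 0 t) := by
    have hqc : ContinuousOn q (Set.Ici 0) := fun s hs ↦ (hq s hs).continuousWithinAt
    have hqdc : ContinuousOn qd (Set.Ici 0) := fun s hs ↦ (hqd s hs).continuousWithinAt
    exact ((hqd'.sub hq').add ((hqdc.sub hqc).const_smul α)).norm.mono Set.Icc_subset_Ici_self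
  have hR : ∀ σ ∈ Set.Icc 0 t, ‖(qd' σ - q' σ) + α • (qd σ - q σ)‖ ≤ R := fun σ hσ ↦
    le_csSup (isCompact_Icc.image_of_continuousOn hcont).bddAbove (Set.mem_image_of_mem _ hσ)
  have herr {σ : ℝ} (hσ : σ ∈ Set.Icc 0 t) : ‖qd σ - q σ‖ ≤ R / α ∧ ‖qd' σ - q' σ‖ ≤ 2 * R :=
    norm_le_div_and_norm_deriv_le_two_mul (e := fun σ ↦ qd σ - q σ) hα
      (fun s hs ↦ (hqd s hs).sub (hq s hs)) (sub_eq_zero.2 h0) hR hσ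
  refine (hD.norm_omega_le hβ ht (fun σ hσ ↦ norm_sub_rev (q σ) _ ▸ (herr hσ).1)
    (fun σ hσ ↦ norm_sub_rev (q' σ) _ ▸ (herr hσ).2) fun σ hσ ↦ hd σ hσ.1).trans_eq ?_
  ring

section Coordinates

variable {n : ℕ}

theorem eunorm_eq_norm_toLp (v : Fin n → ℝ) : eunorm v = ‖WithLp.toLp 2 v‖ := by
  simp [eunorm, EuclideanSpace.norm_eq]

theorem toLp_intervalIntegral (f : ℝ → Fin n → ℝ) (a b : ℝ) :
    WithLp.toLp 2 (∫ σ in a..b, f σ) = ∫ σ in a..b, WithLp.toLp 2 (f σ) := by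
  have hIoc (s : Set ℝ) : WithLp.toLp 2 (∫ σ in s, f σ) = ∫ σ in s, WithLp.toLp 2 (f σ) :=
    ((PiLp.continuousLinearEquiv 2 ℝ (fun _ : Fin n ↦ ℝ)).symm.integral_comp_comm f).symm
  simp only [intervalIntegral, WithLp.toLp_sub, hIoc]

theorem norm_toEuclideanCLM_le {A : Matrix (Fin n) (Fin n) ℝ} {c : ℝ}
    (hA : ∀ v, eunorm (A *ᵥ v) ≤ c * eunorm v) : ‖toEuclideanCLM (𝕜 := ℝ) A‖ ≤ |c| := by
  refine ContinuousLinearMap.opNorm_le_bound _ (abs_nonneg c) fun v ↦ ?_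
  have hv := hA v.ofLp
  rw [eunorm_eq_norm_toLp, eunorm_eq_norm_toLp] at hv
  exact hv.trans (by gcongr; exact le_abs_self c)

theorem adjoint_toEuclideanCLM (A : Matrix (Fin n) (Fin n) ℝ) :
    (toEuclideanCLM (𝕜 := ℝ) A).adjoint = toEuclideanCLM (𝕜 := ℝ) Aᵀ := by
  rw [← ContinuousLinearMap.star_eq_adjoint, ← map_star, star_eq_conjTranspose,
    conjTranspose_eq_transpose_of_trivial]

namespace EulerLagrange

/-- The dynamics on Euclidean space with coefficients given as matrices. -/
noncomputable def ofMatrix (M : (Fin n → ℝ) → Matrix (Fin n) (Fin n) ℝ)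
    (C : (Fin n → ℝ) → (Fin n → ℝ) → Matrix (Fin n) (Fin n) ℝ) (hC : ∀ a, IsLinearMap ℝ (C a))
    (G : (Fin n → ℝ) → Fin n → ℝ) (F : Matrix (Fin n) (Fin n) ℝ) :
    EulerLagrange (EuclideanSpace ℝ (Fin n)) where
  inertia a := toEuclideanCLM (𝕜 := ℝ) (M a.ofLp)
  coriolis a := LinearMap.toContinuousLinearMap
    { toFun w := toEuclideanCLM (𝕜 := ℝ) (C a.ofLp w.ofLp)
      map_add' w v := by rw [WithLp.ofLp_add, (hC _).map_add, map_add]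
      map_smul' c w := by rw [WithLp.ofLp_smul, (hC _).map_smul, map_smul, RingHom.id_apply] }
  gravity a := WithLp.toLp 2 (G a.ofLp)
  friction := toEuclideanCLM (𝕜 := ℝ) F

variable {M : (Fin n → ℝ) → Matrix (Fin n) (Fin n) ℝ}
  {C : (Fin n → ℝ) → (Fin n → ℝ) → Matrix (Fin n) (Fin n) ℝ} {hC : ∀ a, IsLinearMap ℝ (C a)}
  {G : (Fin n → ℝ) → Fin n → ℝ} {F : Matrix (Fin n) (Fin n) ℝ}

theorem coriolis_ofMatrix (a w : EuclideanSpace ℝ (Fin n)) :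
    (ofMatrix M C hC G F).coriolis a w = toEuclideanCLM (𝕜 := ℝ) (C a.ofLp w.ofLp) := rfl

theorem isBounded_ofMatrix {m ζM ζC ζC' ζG ζF : ℝ}
    (hM : ∀ a v, eunorm (M a *ᵥ v) ≤ m * eunorm v)
    (hM' : ∀ a b v, eunorm ((M a - M b) *ᵥ v) ≤ ζM * eunorm (a - b) * eunorm v)
    (hCb : ∀ a w v, eunorm (C a w *ᵥ v) ≤ ζC * eunorm w * eunorm v)
    (hC' : ∀ a b w v, eunorm ((C a w - C b w) *ᵥ v) ≤ ζC' * eunorm (a - b) * eunorm w * eunorm v)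
    (hG : ∀ a b, eunorm (G a - G b) ≤ ζG * eunorm (a - b))
    (hF : ∀ v, eunorm (F *ᵥ v) ≤ ζF * eunorm v) :
    (ofMatrix M C hC G F).IsBounded (Real.nnabs m) (Real.nnabs ζM) (Real.nnabs ζC)
      (Real.nnabs ζC') (Real.nnabs ζG) (Real.nnabs ζF) where
  norm_inertia_le a := norm_toEuclideanCLM_le (hM a.ofLp)
  lipschitz_inertia := .of_dist_le_mul fun a b ↦ by
    have h := norm_toEuclideanCLM_le (hM' a.ofLp b.ofLp)
    rw [eunorm_eq_norm_toLp, abs_mul, abs_norm, map_sub] at h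
    rw [dist_eq_norm, dist_eq_norm]
    exact h
  norm_coriolis_le a := ContinuousLinearMap.opNorm_le_bound _ (NNReal.coe_nonneg _) fun w ↦ by
    have h := norm_toEuclideanCLM_le (hCb a.ofLp w.ofLp)
    rw [eunorm_eq_norm_toLp, abs_mul, abs_norm] at h
    exact h
  lipschitz_coriolis := .of_dist_le_mul fun a b ↦ by
    rw [dist_eq_norm, dist_eq_norm]
    refine ContinuousLinearMap.opNorm_le_bound _ (by positivity) fun w ↦ ?_
    have h := norm_toEuclideanCLM_le (hC' a.ofLp b.ofLp w.ofLp)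
    rw [eunorm_eq_norm_toLp, eunorm_eq_norm_toLp, abs_mul, abs_mul, abs_norm, abs_norm,
      map_sub] at h
    exact h
  lipschitz_gravity := .of_dist_le_mul fun a b ↦ by
    have h := hG a.ofLp b.ofLp
    rw [eunorm_eq_norm_toLp, eunorm_eq_norm_toLp] at h
    rw [dist_eq_norm, dist_eq_norm]
    exact h.trans (mul_le_mul_of_nonneg_right (le_abs_self ζG) (norm_nonneg _))
  norm_friction_le := norm_toEuclideanCLM_le hF

theorem forceError_ofMatrix (a w b v : Fin n → ℝ) :
    (ofMatrix M C hC G F).forceError (WithLp.toLp 2 a) (WithLp.toLp 2 w) (WithLp.toLp 2 b)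
      (WithLp.toLp 2 v) =
    WithLp.toLp 2 (-((C a w + (C a w)ᵀ) *ᵥ w) + (C b v + (C b v)ᵀ) *ᵥ v + C a w *ᵥ w - C b v *ᵥ v
      + G a - G b + F *ᵥ (w - v)) := by
  simp only [forceError, coriolis_ofMatrix, adjoint_toEuclideanCLM, ← map_add]
  rfl

theorem omega_ofMatrix (β : ℝ) (q q' qd qd' : ℝ → Fin n → ℝ) (t : ℝ) :
    (ofMatrix M C hC G F).omega β (fun s ↦ WithLp.toLp 2 (q s)) (fun s ↦ WithLp.toLp 2 (q' s))
      (fun s ↦ WithLp.toLp 2 (qd s)) (fun s ↦ WithLp.toLp 2 (qd' s)) t =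
    WithLp.toLp 2 ((∫ σ in (0 : ℝ)..t, (-β ^ 2 * Real.exp (-β * (t - σ))) •
          (M (q σ) *ᵥ q' σ - M (qd σ) *ᵥ qd' σ))
      + β • (M (q t) *ᵥ q' t - M (qd t) *ᵥ qd' t)
      - (β * Real.exp (-β * t)) • (M (q 0) *ᵥ q' 0 - M (qd 0) *ᵥ qd' 0)
      + ∫ σ in (0 : ℝ)..t, (β * Real.exp (-β * (t - σ))) •
        (-((C (q σ) (q' σ) + (C (q σ) (q' σ))ᵀ) *ᵥ q' σ)
          + (C (qd σ) (qd' σ) + (C (qd σ) (qd' σ))ᵀ) *ᵥ qd' σ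
          + C (q σ) (q' σ) *ᵥ q' σ - C (qd σ) (qd' σ) *ᵥ qd' σ
          + G (q σ) - G (qd σ) + F *ᵥ (q' σ - qd' σ))) := by
  simp only [omega, forceError_ofMatrix, WithLp.toLp_add, WithLp.toLp_sub, toLp_intervalIntegral]
  rfl

end EulerLagrange

end Coordinates

/-- Appendix Lemma, full-state-feedback version. If `e(0) = 0`
and `r = ė + α e` for a constant `α > 0`, then there exist nonnegative constants
`ξ₁, ξ₂, ξ₃`, depending only on `β`, `α` and the bounding constants
`m₂, ζM1, ζC1, ζC2, ζG, ζF, ζd1`, such that for every `t ≥ 0`,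
`‖Ω(t)‖ ≤ (ξ₁ + ξ₂ E(t) + ξ₃ R(t)) R(t)` where `E(t) = sup_{0≤σ≤t} ‖e(σ)‖`
and `R(t) = sup_{0≤σ≤t} ‖r(σ)‖`. -/
theorem appendix_lemma_fsfb
    (β α m₂ ζM1 ζC1 ζC2 ζG ζF ζd1 : ℝ)
    (hβ : 0 < β) (hα : 0 < α) :
    ∃ ξ₁ ξ₂ ξ₃ : ℝ, 0 ≤ ξ₁ ∧ 0 ≤ ξ₂ ∧ 0 ≤ ξ₃ ∧
      ∀ (n : ℕ) (q qd q' qd' : ℝ → Fin n → ℝ)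
        (Mm : (Fin n → ℝ) → Matrix (Fin n) (Fin n) ℝ)
        (Cc : (Fin n → ℝ) → (Fin n → ℝ) → Matrix (Fin n) (Fin n) ℝ)
        (G : (Fin n → ℝ) → Fin n → ℝ)
        (Fd : Matrix (Fin n) (Fin n) ℝ)
        (Ω : ℝ → Fin n → ℝ),
        -- trajectories and their derivatives
        (∀ t, HasDerivAt q (q' t) t) → (∀ t, HasDerivAt qd (qd' t) t) →
        Continuous q' → Continuous qd' →
        -- initial rest conditions and e(0) = 0
        q' 0 = 0 → qd' 0 = 0 → qd 0 = q 0 →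
        -- bounded desired velocity
        (∀ t, 0 ≤ t → eunorm (qd' t) ≤ ζd1) →
        -- induced-norm bounds on the dynamic terms
        (∀ a v, eunorm ((Mm a).mulVec v) ≤ m₂ * eunorm v) →
        (∀ a b v, eunorm ((Mm a - Mm b).mulVec v) ≤ ζM1 * eunorm (a - b) * eunorm v) →
        (∀ a w v, eunorm ((Cc a w).mulVec v) ≤ ζC1 * eunorm w * eunorm v) →
        (∀ a b w v, eunorm ((Cc a w - Cc b w).mulVec v) ≤
          ζC2 * eunorm (a - b) * eunorm w * eunorm v) →
        -- C is linear in its second argument and satisfies the switching property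
        (∀ a, IsLinearMap ℝ (Cc a)) →
        (∀ a ν ξ, (Cc a ν).mulVec ξ = (Cc a ξ).mulVec ν) →
        (∀ a b, eunorm (G a - G b) ≤ ζG * eunorm (a - b)) →
        (∀ v, eunorm (Fd.mulVec v) ≤ ζF * eunorm v) →
        -- (d/dt)[M(q(t))] = C(q, q̇) + C(q, q̇)ᵀ along any C¹ curve
        (∀ (c c' : ℝ → Fin n → ℝ), (∀ s, HasDerivAt c (c' s) s) →
          ∀ s i j, HasDerivAt (fun u => Mm (c u) i j)
            ((Cc (c s) (c' s) + (Cc (c s) (c' s))ᵀ) i j) s) →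
        -- definition of Ω via the filter f(t) = β exp(-βt):
        -- Ω(t) = ∫₀ᵗ f'(t-σ) h(σ) dσ + f(0) h(t) - f(t) h(0) + ∫₀ᵗ f(t-σ) g(σ) dσ
        (∀ t, Ω t =
          (∫ σ in (0:ℝ)..t, (-β ^ 2 * Real.exp (-β * (t - σ))) •
              ((Mm (q σ)).mulVec (q' σ) - (Mm (qd σ)).mulVec (qd' σ)))
          + β • ((Mm (q t)).mulVec (q' t) - (Mm (qd t)).mulVec (qd' t))
          - (β * Real.exp (-β * t)) •
              ((Mm (q 0)).mulVec (q' 0) - (Mm (qd 0)).mulVec (qd' 0))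
          + ∫ σ in (0:ℝ)..t, (β * Real.exp (-β * (t - σ))) •
              (-((Cc (q σ) (q' σ) + (Cc (q σ) (q' σ))ᵀ).mulVec (q' σ))
                + (Cc (qd σ) (qd' σ) + (Cc (qd σ) (qd' σ))ᵀ).mulVec (qd' σ)
                + (Cc (q σ) (q' σ)).mulVec (q' σ)
                - (Cc (qd σ) (qd' σ)).mulVec (qd' σ)
                + G (q σ) - G (qd σ) + Fd.mulVec (q' σ - qd' σ))) →
        -- conclusion, with e = q_d - q and r = ė + α e
        ∀ t, 0 ≤ t →
          eunorm (Ω t) ≤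
            (ξ₁ + ξ₂ * sSup ((fun σ => eunorm (qd σ - q σ)) '' Set.Icc 0 t)
                + ξ₃ * sSup ((fun σ =>
                    eunorm ((qd' σ - q' σ) + α • (qd σ - q σ))) '' Set.Icc 0 t))
              * sSup ((fun σ =>
                  eunorm ((qd' σ - q' σ) + α • (qd σ - q σ))) '' Set.Icc 0 t) := by
  refine ⟨2 * β * (2 * |m₂| + |ζM1| * |ζd1| / α) + (4 * |ζC1| * |ζd1| + |ζC2| * |ζd1| ^ 2 / α
    + |ζG| / α + 2 * |ζF|), 0, 4 * |ζC1|, by positivity, le_rfl, by positivity, ?_⟩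
  intro n q qd q' qd' Mm Cc G Fd Ω hq hqd hq' hqd' _ _ h0 hd hM hM' hC hC' hlin _ hG hF _ hΩ t ht
  have hlift {c c' : ℝ → Fin n → ℝ} (hc : ∀ s, HasDerivAt c (c' s) s) (s : ℝ) :
      HasDerivAt (fun s ↦ WithLp.toLp 2 (c s)) (WithLp.toLp 2 (c' s)) s :=
    (PiLp.hasFDerivAt_toLp 2 _).comp_hasDerivAt s (hc s)
  have hbounded := EulerLagrange.isBounded_ofMatrix (hC := hlin) hM hM' hC hC' hG hF
  have hbound := appendix_lemma_fsfb_general hbounded hβ.le hα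
    (fun s _ ↦ (hlift hq s).hasDerivWithinAt) (fun s _ ↦ (hlift hqd s).hasDerivWithinAt)
    (by fun_prop) (by fun_prop) (congrArg _ h0)
    (fun s hs ↦ (eunorm_eq_norm_toLp _).symm.trans_le ((hd s hs).trans (le_abs_self ζd1))) ht
  rw [EulerLagrange.omega_ofMatrix, ← hΩ] at hbound
  simpa only [eunorm_eq_norm_toLp, zero_mul, add_zero, WithLp.toLp_add, WithLp.toLp_sub,
    WithLp.toLp_smul, Real.coe_nnabs] using hbound
end
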